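/- Let α > 0. There exists a constant c > 0, depending only on L, h and α, such that for every u of class C² on M̄, vanishing on the lateral boundary Γ_l = {0,L}×[−h,0] and on the bottom Γ_b = [0,L]×{−h}, satisfying ∂_z u(x,0) + α u(x,0) = 0 for all x and ∫_{−h}^0 u(x,z) dz = 0 for all x, one has | ∫_M ( u ∂_x u + w(u) ∂_z u ) · ( −Q ∂_{zz} u ) dM | ≤ c ( |u| ‖u‖_{H¹}² + |∂_z u|^{1/2} ‖∂_z u‖_{H¹}^{1/2} |u|^{1/2} ‖u‖_{H¹}^{3/2} ), where Qg = g − (1/h) ∫_{−h}^0 g(·,s) ds. -/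

import Mathlib

open MeasureTheory Set intervalIntegral

/-- Partial derivative in the first (horizontal, `x`) variable. -/
noncomputable def pdx (f : ℝ × ℝ → ℝ) (p : ℝ × ℝ) : ℝ := fderiv ℝ f p (1, 0)

/-- Partial derivative in the second (vertical, `z`) variable. -/
noncomputable def pdz (f : ℝ × ℝ → ℝ) (p : ℝ × ℝ) : ℝ := fderiv ℝ f p (0, 1)

/-- The diagnostic vertical velocity `w(u)(x,z) = ∫_z^0 ∂ₓ u(x,s) ds`. -/
noncomputable def wOp (u : ℝ × ℝ → ℝ) (p : ℝ × ℝ) : ℝ := ∫ s in p.2..0, pdx u (p.1, s)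

/-- The open domain `M = (0,L) × (-h,0)`. -/
def dom (L h : ℝ) : Set (ℝ × ℝ) := Ioo 0 L ×ˢ Ioo (-h) 0

/-- The closed domain `M̄ = [0,L] × [-h,0]`. -/
def cdom (L h : ℝ) : Set (ℝ × ℝ) := Icc 0 L ×ˢ Icc (-h) 0

/-- The `L²(M)` norm. -/
noncomputable def l2 (L h : ℝ) (f : ℝ × ℝ → ℝ) : ℝ :=
  Real.sqrt (∫ p in dom L h, f p ^ 2)

/-- The `H¹(M)` norm. -/
noncomputable def h1n (L h : ℝ) (f : ℝ × ℝ → ℝ) : ℝ :=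
  Real.sqrt (l2 L h f ^ 2 + l2 L h (pdx f) ^ 2 + l2 L h (pdz f) ^ 2)

/-- The `H²(M)` norm. -/
noncomputable def h2n (L h : ℝ) (f : ℝ × ℝ → ℝ) : ℝ :=
  Real.sqrt (h1n L h f ^ 2 + l2 L h (pdx (pdx f)) ^ 2 + l2 L h (pdx (pdz f)) ^ 2
    + l2 L h (pdz (pdz f)) ^ 2)

/-- The orthogonal complement `Q` of the vertical averaging operator:
`(Q g)(x,z) = g(x,z) - (1/h) ∫_{-h}^0 g(x,s) ds`. -/
noncomputable def Qop (h : ℝ) (g : ℝ × ℝ → ℝ) (p : ℝ × ℝ) : ℝ :=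
  g p - (1 / h) * ∫ s in (-h)..(0:ℝ), g (p.1, s)

/-!
Integrate by parts in `∫ (u ∂ₓu + w ∂_z u) ∂_z∂_z u`. The boundary conditions and `w(·, -h) = 0`,
which is the derivative of the zero-mean condition, leave only the top flux
`∫ (u ∂ₓu ∂_z u)(x, 0) dx`; by the Robin condition its integrand is the exact derivative
`-α ∂ₓ(u³ / 3)`. So the nonlinear term is orthogonal to `∂_z∂_z u`, and only its pairing with
`m = P ∂_z∂_z u` remains. Since `m` depends on `x` alone, another integration by parts turns this
pairing into `2 ∫ m u ∂ₓu`, and the Robin condition expresses `m` through traces: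
`m = -(α u(·, 0) + ∂_z u(·, -h)) / h`. Each product is bounded by the `L²` norms in `x` of the trace
and in `M` of `∂ₓu`, times the supremum over `x` of `‖u(x, ·)‖_{L²}`; traces and supremum are
controlled by integrating `f(s)² ≤ f(t)² + 2 ∫ |f f'|` along the other coordinate.
-/

section OneVariable

variable {f f' : ℝ → ℝ} {a b s t : ℝ}

theorem sq_le_sq_add_two_mul_integral_abs_mul_deriv
    (hf : ∀ x ∈ Icc a b, HasDerivAt f (f' x) x) (hf' : ContinuousOn f' (Icc a b))
    (hs : s ∈ Icc a b) (ht : t ∈ Icc a b) :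
    f s ^ 2 ≤ f t ^ 2 + 2 * ∫ x in a..b, |f x * f' x| := by
  have hab : a ≤ b := hs.1.trans hs.2
  have hsub : uIcc t s ⊆ Icc a b := uIcc_subset_Icc ht hs
  have hfc : ContinuousOn f (Icc a b) := HasDerivAt.continuousOn hf
  have hcont : ContinuousOn (fun x ↦ f x * f' x) (Icc a b) := hfc.mul hf'
  have hftc : ∫ x in t..s, 2 * (f x * f' x) = f s ^ 2 - f t ^ 2 := by
    refine intervalIntegral.integral_eq_sub_of_hasDerivAt (f := fun x ↦ f x ^ 2) (fun x hx ↦ ?_)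
      ((hcont.mono hsub).const_smul (2 : ℝ)).intervalIntegrable
    exact ((hf x (hsub hx)).pow 2).congr_deriv (by norm_num [mul_assoc])
  have habs : |∫ x in t..s, f x * f' x| ≤ ∫ x in a..b, |f x * f' x| :=
    calc |∫ x in t..s, f x * f' x|
        ≤ |∫ x in t..s, (|f x * f' x|)| := by
          simpa only [Real.norm_eq_abs] using
            intervalIntegral.norm_integral_le_abs_integral_norm (f := fun x ↦ f x * f' x)
      _ ≤ |∫ x in a..b, (|f x * f' x|)| := by
          refine intervalIntegral.abs_integral_mono_interval ?_
            (ae_of_all _ fun x ↦ abs_nonneg _) (hcont.abs.intervalIntegrable_of_Icc hab)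
          exact uIoc_subset_uIoc_of_uIcc_subset_uIcc (by rwa [uIcc_of_le hab])
      _ = ∫ x in a..b, |f x * f' x| :=
          abs_of_nonneg (intervalIntegral.integral_nonneg hab fun x _ ↦ abs_nonneg _)
  rw [intervalIntegral.integral_const_mul] at hftc
  linarith [le_abs_self (∫ x in t..s, f x * f' x)]

theorem sq_le_average_sq_add_two_mul_integral_abs_mul_deriv (hab : a < b)
    (hf : ∀ x ∈ Icc a b, HasDerivAt f (f' x) x) (hf' : ContinuousOn f' (Icc a b))
    (hs : s ∈ Icc a b) :
    f s ^ 2 ≤ 1 / (b - a) * (∫ x in a..b, f x ^ 2) + 2 * ∫ x in a..b, |f x * f' x| := by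
  have hfc : ContinuousOn f (Icc a b) := HasDerivAt.continuousOn hf
  have hsq : IntervalIntegrable (fun x ↦ f x ^ 2) volume a b :=
    (hfc.pow 2).intervalIntegrable_of_Icc hab.le
  have hmono : ∫ _ in a..b, f s ^ 2 ≤
      ∫ t in a..b, (f t ^ 2 + 2 * ∫ x in a..b, |f x * f' x|) :=
    intervalIntegral.integral_mono_on hab.le intervalIntegrable_const
      (hsq.add intervalIntegrable_const)
      fun t ht ↦ sq_le_sq_add_two_mul_integral_abs_mul_deriv hf hf' hs ht
  rw [intervalIntegral.integral_add hsq intervalIntegrable_const,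
    intervalIntegral.integral_const, intervalIntegral.integral_const, smul_eq_mul,
    smul_eq_mul] at hmono
  have hpos : 0 < b - a := sub_pos.2 hab
  rw [← mul_le_mul_iff_right₀ hpos]
  refine hmono.trans_eq ?_
  field_simp

end OneVariable

theorem integral_abs_mul_le_sqrt_mul_sqrt {Ω : Type*} [MeasurableSpace Ω] {μ : Measure Ω}
    {f g : Ω → ℝ} (hf : MemLp f 2 μ) (hg : MemLp g 2 μ) :
    ∫ x, |f x * g x| ∂μ ≤ √(∫ x, f x ^ 2 ∂μ) * √(∫ x, g x ^ 2 ∂μ) := by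
  have hCS := integral_mul_norm_le_Lp_mul_Lq (μ := μ) (f := f) (g := g)
    Real.HolderConjugate.two_two (by simpa using hf) (by simpa using hg)
  simpa [abs_mul, Real.sqrt_eq_rpow] using hCS

section Parametric

variable {F : ℝ × ℝ → ℝ}

theorem continuous_integral_snd (hF : Continuous F) (a b : ℝ) :
    Continuous fun x ↦ ∫ z in a..b, F (x, z) :=
  intervalIntegral.continuous_parametric_intervalIntegral_of_continuous'
    (f := fun x z ↦ F (x, z)) hF a b

theorem continuous_integral_fst (hF : Continuous F) (a b : ℝ) :
    Continuous fun z ↦ ∫ x in a..b, F (x, z) :=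
  continuous_integral_snd (hF.comp continuous_swap) a b

theorem intervalIntegral_swap (hF : Continuous F) (a b c d : ℝ) :
    ∫ x in a..b, ∫ z in c..d, F (x, z) = ∫ z in c..d, ∫ x in a..b, F (x, z) := by
  refine intervalIntegral_intervalIntegral_swap (F := fun x z ↦ F (x, z)) ?_
  exact (hF.continuousOn.integrableOn_compact (isCompact_uIcc.prod isCompact_uIcc)).mono_set
    (prod_mono uIoc_subset_uIcc uIoc_subset_uIcc)

end Parametric

section PartialDerivatives

variable {f u : ℝ × ℝ → ℝ}

theorem hasDerivAt_pdx {x z : ℝ} (hf : DifferentiableAt ℝ f (x, z)) :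
    HasDerivAt (fun t ↦ f (t, z)) (pdx f (x, z)) x :=
  hf.hasFDerivAt.comp_hasDerivAt x ((hasDerivAt_id x).prodMk (hasDerivAt_const x z))

theorem hasDerivAt_pdz {x z : ℝ} (hf : DifferentiableAt ℝ f (x, z)) :
    HasDerivAt (fun t ↦ f (x, t)) (pdz f (x, z)) z :=
  hf.hasFDerivAt.comp_hasDerivAt z ((hasDerivAt_const z x).prodMk (hasDerivAt_id z))

theorem contDiff_pdx {m n : WithTop ℕ∞} (hf : ContDiff ℝ n f) (hmn : m + 1 ≤ n) :
    ContDiff ℝ m (pdx f) :=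
  (hf.fderiv_right hmn).clm_apply contDiff_const

theorem contDiff_pdz {m n : WithTop ℕ∞} (hf : ContDiff ℝ n f) (hmn : m + 1 ≤ n) :
    ContDiff ℝ m (pdz f) :=
  (hf.fderiv_right hmn).clm_apply contDiff_const

@[fun_prop]
theorem continuous_pdx (hf : ContDiff ℝ 1 f) : Continuous (pdx f) :=
  (contDiff_pdx (m := 0) hf (by norm_num)).continuous

@[fun_prop]
theorem continuous_pdz (hf : ContDiff ℝ 1 f) : Continuous (pdz f) :=
  (contDiff_pdz (m := 0) hf (by norm_num)).continuous

theorem pdx_pdz_comm (hu : ContDiff ℝ 2 u) (p : ℝ × ℝ) : pdx (pdz u) p = pdz (pdx u) p := by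
  have hsymm : IsSymmSndFDerivAt ℝ u p := hu.contDiffAt.isSymmSndFDerivAt (by simp)
  have hdiff : DifferentiableAt ℝ (fderiv ℝ u) p :=
    (hu.fderiv_right (m := 1) (by norm_num)).differentiable (by norm_num) p
  have hsnd (v y : ℝ × ℝ) :
      fderiv ℝ (fun q ↦ fderiv ℝ u q v) p y = fderiv ℝ (fderiv ℝ u) p y v := by
    rw [fderiv_clm_apply hdiff (differentiableAt_const v)]
    simp
  unfold pdx pdz
  rw [hsnd, hsnd]
  exact hsymm (1, 0) (0, 1)

theorem pdz_mul {g : ℝ × ℝ → ℝ} {p : ℝ × ℝ} (hf : DifferentiableAt ℝ f p)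
    (hg : DifferentiableAt ℝ g p) :
    pdz (fun q ↦ f q * g q) p = pdz f p * g p + f p * pdz g p :=
  (hasDerivAt_pdz (hf.mul hg)).unique ((hasDerivAt_pdz hf).mul (hasDerivAt_pdz hg))

theorem hasDerivAt_integral_pdx (hf : ContDiff ℝ 1 f) (a b x : ℝ) :
    HasDerivAt (fun t ↦ ∫ z in a..b, f (t, z)) (∫ z in a..b, pdx f (x, z)) x := by
  have hpdx : Continuous (pdx f) := continuous_pdx hf
  have hprimitive (t : ℝ) : ∫ z in a..b, f (t, z) =
      (∫ z in a..b, f (0, z)) + ∫ y in 0..t, ∫ z in a..b, pdx f (y, z) := by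
    have hftc (z : ℝ) : ∫ y in 0..t, pdx f (y, z) = f (t, z) - f (0, z) :=
      intervalIntegral.integral_eq_sub_of_hasDerivAt
        (fun y _ ↦ hasDerivAt_pdx (hf.differentiable one_ne_zero _))
        (Continuous.intervalIntegrable (by fun_prop) _ _)
    simp only [intervalIntegral_swap hpdx, hftc]
    rw [intervalIntegral.integral_sub (Continuous.intervalIntegrable (by fun_prop) _ _)
      (Continuous.intervalIntegrable (by fun_prop) _ _), add_sub_cancel]
  rw [funext hprimitive]
  exact ((continuous_integral_snd hpdx a b).integral_hasStrictDerivAt 0 x).hasDerivAt.const_add _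

end PartialDerivatives

section Domain

variable {L h : ℝ} {f g F F' : ℝ × ℝ → ℝ}

theorem integrableOn_dom (hF : Continuous F) : IntegrableOn F (dom L h) :=
  (hF.continuousOn.integrableOn_compact (isCompact_Icc.prod isCompact_Icc)).mono_set
    (prod_mono Ioo_subset_Icc_self Ioo_subset_Icc_self)

theorem integral_dom_eq_iterated (hL : 0 ≤ L) (hh : 0 ≤ h) (hF : IntegrableOn F (dom L h)) :
    ∫ p in dom L h, F p = ∫ x in 0..L, ∫ z in -h..0, F (x, z) := by
  rw [dom, Measure.volume_eq_prod] at *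
  simp only [setIntegral_prod F hF, intervalIntegral.integral_of_le hL,
    intervalIntegral.integral_of_le (neg_nonpos.2 hh), integral_Ioc_eq_integral_Ioo]

theorem integral_dom_of_hasDerivAt_snd (hL : 0 ≤ L) (hh : 0 ≤ h) (hF' : Continuous F')
    (hF : ∀ x z, HasDerivAt (fun t ↦ F (x, t)) (F' (x, z)) z) :
    ∫ p in dom L h, F' p = ∫ x in 0..L, (F (x, 0) - F (x, -h)) := by
  rw [integral_dom_eq_iterated hL hh (integrableOn_dom hF')]
  refine intervalIntegral.integral_congr fun x _ ↦ ?_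
  exact intervalIntegral.integral_eq_sub_of_hasDerivAt (f := fun t ↦ F (x, t)) (fun z _ ↦ hF x z)
    (Continuous.intervalIntegrable (by fun_prop) _ _)

theorem integral_dom_of_hasDerivAt_fst (hL : 0 ≤ L) (hh : 0 ≤ h) (hF' : Continuous F')
    (hF : ∀ x z, HasDerivAt (fun t ↦ F (t, z)) (F' (x, z)) x) :
    ∫ p in dom L h, F' p = ∫ z in -h..0, (F (L, z) - F (0, z)) := by
  rw [integral_dom_eq_iterated hL hh (integrableOn_dom hF'),
    intervalIntegral_swap hF']
  refine intervalIntegral.integral_congr fun z _ ↦ ?_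
  exact intervalIntegral.integral_eq_sub_of_hasDerivAt (f := fun t ↦ F (t, z)) (fun x _ ↦ hF x z)
    (Continuous.intervalIntegrable (by fun_prop) _ _)

theorem l2_nonneg : 0 ≤ l2 L h f := Real.sqrt_nonneg _

theorem sq_l2 : l2 L h f ^ 2 = ∫ p in dom L h, f p ^ 2 :=
  Real.sq_sqrt (integral_nonneg fun _ ↦ sq_nonneg _)

theorem h1n_nonneg : 0 ≤ h1n L h f := Real.sqrt_nonneg _

theorem l2_le_h1n : l2 L h f ≤ h1n L h f :=
  Real.le_sqrt_of_sq_le (by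
    linarith [sq_nonneg (l2 L h (pdx f)), sq_nonneg (l2 L h (pdz f))])

theorem l2_pdx_le_h1n : l2 L h (pdx f) ≤ h1n L h f :=
  Real.le_sqrt_of_sq_le (by linarith [sq_nonneg (l2 L h f), sq_nonneg (l2 L h (pdz f))])

theorem l2_pdz_le_h1n : l2 L h (pdz f) ≤ h1n L h f :=
  Real.le_sqrt_of_sq_le (by linarith [sq_nonneg (l2 L h f), sq_nonneg (l2 L h (pdx f))])

theorem integral_dom_abs_mul_le (hf : Continuous f) (hg : Continuous g) :
    ∫ p in dom L h, |f p * g p| ≤ l2 L h f * l2 L h g :=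
  have memLp_two {k : ℝ × ℝ → ℝ} (hk : Continuous k) : MemLp k 2 (volume.restrict (dom L h)) :=
    (memLp_two_iff_integrable_sq hk.aestronglyMeasurable).2 (integrableOn_dom (hk.pow 2))
  integral_abs_mul_le_sqrt_mul_sqrt (memLp_two hf) (memLp_two hg)

theorem integral_sq_vertical_slice_le (hh : 0 ≤ h) (hf : ContDiff ℝ 1 f)
    (hleft : ∀ z ∈ Icc (-h) 0, f (0, z) = 0) {x : ℝ} (hx : x ∈ Icc 0 L) :
    ∫ z in -h..0, f (x, z) ^ 2 ≤ 2 * (l2 L h f * l2 L h (pdx f)) := by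
  have hpoint : ∀ z ∈ Icc (-h) 0, f (x, z) ^ 2 ≤ 2 * ∫ t in 0..L, |f (t, z) * pdx f (t, z)| := by
    intro z hz
    have hslice := sq_le_sq_add_two_mul_integral_abs_mul_deriv (f := fun t ↦ f (t, z))
      (fun t _ ↦ hasDerivAt_pdx (hf.differentiable one_ne_zero _)) (by fun_prop) hx
      (left_mem_Icc.2 (hx.1.trans hx.2))
    simpa [hleft z hz] using hslice
  have hcont : Continuous fun p ↦ |f p * pdx f p| := by fun_prop
  calc ∫ z in -h..0, f (x, z) ^ 2
      ≤ ∫ z in -h..0, 2 * ∫ t in 0..L, |f (t, z) * pdx f (t, z)| :=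
        intervalIntegral.integral_mono_on (neg_nonpos.2 hh)
          (Continuous.intervalIntegrable (by fun_prop) _ _)
          ((continuous_integral_fst hcont 0 L).const_mul 2 |>.intervalIntegrable _ _) hpoint
    _ = 2 * ∫ p in dom L h, |f p * pdx f p| := by
        rw [intervalIntegral.integral_const_mul, integral_dom_eq_iterated (hx.1.trans hx.2) hh
          (integrableOn_dom hcont), intervalIntegral_swap hcont]
    _ ≤ 2 * (l2 L h f * l2 L h (pdx f)) := by
        gcongr
        exact integral_dom_abs_mul_le hf.continuous (continuous_pdx hf)

theorem integral_sq_horizontal_slice_le_of_bottom_eq_zero (hL : 0 ≤ L) (hf : ContDiff ℝ 1 f)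
    (hbot : ∀ x ∈ Icc 0 L, f (x, -h) = 0) {z : ℝ} (hz : z ∈ Icc (-h) 0) :
    ∫ x in 0..L, f (x, z) ^ 2 ≤ 2 * (l2 L h f * l2 L h (pdz f)) := by
  have hh : -h ≤ 0 := hz.1.trans hz.2
  have hpoint : ∀ x ∈ Icc 0 L, f (x, z) ^ 2 ≤ 2 * ∫ t in -h..0, |f (x, t) * pdz f (x, t)| := by
    intro x hx
    have hslice := sq_le_sq_add_two_mul_integral_abs_mul_deriv (f := fun t ↦ f (x, t))
      (fun t _ ↦ hasDerivAt_pdz (hf.differentiable one_ne_zero _)) (by fun_prop) hz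
      (left_mem_Icc.2 hh)
    simpa [hbot x hx] using hslice
  have hcont : Continuous fun p ↦ |f p * pdz f p| := by fun_prop
  calc ∫ x in 0..L, f (x, z) ^ 2
      ≤ ∫ x in 0..L, 2 * ∫ t in -h..0, |f (x, t) * pdz f (x, t)| :=
        intervalIntegral.integral_mono_on hL (Continuous.intervalIntegrable (by fun_prop) _ _)
          ((continuous_integral_snd hcont (-h) 0).const_mul 2 |>.intervalIntegrable _ _) hpoint
    _ = 2 * ∫ p in dom L h, |f p * pdz f p| := by
        rw [intervalIntegral.integral_const_mul,
          integral_dom_eq_iterated hL (neg_nonpos.1 hh) (integrableOn_dom hcont)]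
    _ ≤ 2 * (l2 L h f * l2 L h (pdz f)) := by
        gcongr
        exact integral_dom_abs_mul_le hf.continuous (continuous_pdz hf)

theorem integral_sq_horizontal_slice_le (hL : 0 ≤ L) (hh : 0 < h) (hf : ContDiff ℝ 1 f)
    {z : ℝ} (hz : z ∈ Icc (-h) 0) :
    ∫ x in 0..L, f (x, z) ^ 2 ≤
      1 / h * l2 L h f ^ 2 + 2 * (l2 L h f * l2 L h (pdz f)) := by
  have hpoint (x : ℝ) : f (x, z) ^ 2 ≤ 1 / h * (∫ t in -h..0, f (x, t) ^ 2) +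
      2 * ∫ t in -h..0, |f (x, t) * pdz f (x, t)| := by
    have hslice := sq_le_average_sq_add_two_mul_integral_abs_mul_deriv (f := fun t ↦ f (x, t))
      (neg_lt_zero.2 hh) (fun t _ ↦ hasDerivAt_pdz (hf.differentiable one_ne_zero _))
      (by fun_prop) hz
    simpa using hslice
  have hsq : Continuous fun p ↦ f p ^ 2 := by fun_prop
  have hmul : Continuous fun p ↦ |f p * pdz f p| := by fun_prop
  have hsq_int := ((continuous_integral_snd hsq (-h) 0).const_mul (1 / h)).intervalIntegrable
    (μ := volume) 0 L
  have hmul_int := ((continuous_integral_snd hmul (-h) 0).const_mul 2).intervalIntegrable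
    (μ := volume) 0 L
  calc ∫ x in 0..L, f (x, z) ^ 2
      ≤ ∫ x in 0..L, (1 / h * (∫ t in -h..0, f (x, t) ^ 2) +
          2 * ∫ t in -h..0, |f (x, t) * pdz f (x, t)|) :=
        intervalIntegral.integral_mono_on hL (Continuous.intervalIntegrable (by fun_prop) _ _)
          (hsq_int.add hmul_int) fun x _ ↦ hpoint x
    _ = 1 / h * (∫ p in dom L h, f p ^ 2) + 2 * ∫ p in dom L h, |f p * pdz f p| := by
        rw [intervalIntegral.integral_add hsq_int hmul_int, intervalIntegral.integral_const_mul,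
          intervalIntegral.integral_const_mul,
          integral_dom_eq_iterated hL hh.le (integrableOn_dom hsq),
          integral_dom_eq_iterated hL hh.le (integrableOn_dom hmul)]
    _ ≤ 1 / h * l2 L h f ^ 2 + 2 * (l2 L h f * l2 L h (pdz f)) := by
        rw [sq_l2]
        gcongr
        exact integral_dom_abs_mul_le hf.continuous (continuous_pdz hf)

theorem abs_integral_mul_mul_le {b : ℝ → ℝ} {K : ℝ} (hL : 0 ≤ L) (hh : 0 ≤ h)
    (hb : Continuous b) (hf : Continuous f) (hg : Continuous g)
    (hK : ∀ x ∈ Icc 0 L, ∫ z in -h..0, f (x, z) ^ 2 ≤ K) :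
    |∫ p in dom L h, b p.1 * (f p * g p)| ≤ √((∫ x in 0..L, b x ^ 2) * K) * l2 L h g := by
  have hbf : Continuous fun p : ℝ × ℝ ↦ b p.1 * f p := by fun_prop
  have hsq : Continuous fun p : ℝ × ℝ ↦ (b p.1 * f p) ^ 2 := by fun_prop
  have hl2 : l2 L h (fun p ↦ b p.1 * f p) ≤ √((∫ x in 0..L, b x ^ 2) * K) := by
    refine Real.sqrt_le_sqrt ?_
    rw [integral_dom_eq_iterated hL hh (integrableOn_dom hsq),
      ← intervalIntegral.integral_mul_const]
    refine intervalIntegral.integral_mono_on hL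
      ((continuous_integral_snd hsq (-h) 0).intervalIntegrable _ _)
      (Continuous.intervalIntegrable (by fun_prop) _ _) fun x hx ↦ ?_
    simp only [mul_pow, intervalIntegral.integral_const_mul]
    exact mul_le_mul_of_nonneg_left (hK x hx) (sq_nonneg _)
  calc |∫ p in dom L h, b p.1 * (f p * g p)|
      ≤ ∫ p in dom L h, |b p.1 * f p * g p| := by
        simpa only [mul_assoc] using MeasureTheory.abs_integral_le_integral_abs
    _ ≤ l2 L h (fun p ↦ b p.1 * f p) * l2 L h g := integral_dom_abs_mul_le hbf hg
    _ ≤ √((∫ x in 0..L, b x ^ 2) * K) * l2 L h g := mul_le_mul_of_nonneg_right hl2 l2_nonneg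

end Domain

section VerticalVelocity

variable {L h : ℝ} {u : ℝ × ℝ → ℝ}

theorem wOp_eq_neg_integral (u : ℝ × ℝ → ℝ) :
    wOp u = fun p ↦ -∫ s in 0..p.2, pdx u (p.1, s) :=
  funext fun p ↦ intervalIntegral.integral_symm 0 p.2

@[fun_prop]
theorem continuous_wOp (hu : ContDiff ℝ 1 u) : Continuous (wOp u) := by
  rw [wOp_eq_neg_integral]
  refine (intervalIntegral.continuous_parametric_intervalIntegral_of_continuous
    (f := fun (p : ℝ × ℝ) s ↦ pdx u (p.1, s)) ?_ continuous_snd).neg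
  exact (continuous_pdx hu).comp (by fun_prop)

theorem hasDerivAt_wOp (hu : ContDiff ℝ 1 u) (x z : ℝ) :
    HasDerivAt (fun t ↦ wOp u (x, t)) (-pdx u (x, z)) z := by
  have hpdx : Continuous fun s ↦ pdx u (x, s) := (continuous_pdx hu).comp (by fun_prop)
  rw [wOp_eq_neg_integral]
  exact (hpdx.integral_hasStrictDerivAt 0 z).hasDerivAt.neg

theorem wOp_top (u : ℝ × ℝ → ℝ) (x : ℝ) : wOp u (x, 0) = 0 :=
  intervalIntegral.integral_same

theorem wOp_bottom_eq_zero (hu : ContDiff ℝ 1 u)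
    (hmean : ∀ x ∈ Icc 0 L, ∫ z in -h..0, u (x, z) = 0) {x : ℝ} (hx : x ∈ Ioo 0 L) :
    wOp u (x, -h) = 0 := by
  refine (hasDerivAt_integral_pdx hu (-h) 0 x).unique
    ((hasDerivAt_const x 0).congr_of_eventuallyEq ?_)
  filter_upwards [Icc_mem_nhds hx.1 hx.2] using hmean

end VerticalVelocity

/-- The nonlinear term `u ∂ₓu + w(u) ∂_z u` of the primitive equations. -/
noncomputable def advection (u : ℝ × ℝ → ℝ) (p : ℝ × ℝ) : ℝ :=
  u p * pdx u p + wOp u p * pdz u p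

/-- The vertical average `P g` as a function of the horizontal variable alone, so that
`Q g = g - P g`. -/
noncomputable def verticalMean (h : ℝ) (g : ℝ × ℝ → ℝ) (x : ℝ) : ℝ :=
  1 / h * ∫ s in -h..0, g (x, s)

section Advection

variable {L h α : ℝ} {u v f g : ℝ × ℝ → ℝ}

theorem continuous_advection (hu : ContDiff ℝ 1 u) : Continuous (advection u) :=
  (hu.continuous.mul (continuous_pdx hu)).add ((continuous_wOp hu).mul (continuous_pdz hu))

theorem continuous_verticalMean (hg : Continuous g) :
    Continuous (verticalMean h g) :=
  (continuous_integral_snd hg (-h) 0).const_mul (1 / h)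

theorem verticalMean_pdz (hf : ContDiff ℝ 1 f) (x : ℝ) :
    verticalMean h (pdz f) x = 1 / h * (f (x, 0) - f (x, -h)) := by
  rw [verticalMean, intervalIntegral.integral_eq_sub_of_hasDerivAt (f := fun t ↦ f (x, t))
    (fun z _ ↦ hasDerivAt_pdz (hf.differentiable one_ne_zero _))
    (Continuous.intervalIntegrable (by fun_prop) _ _)]

theorem integral_wOp_mul_mul_pdz (hL : 0 ≤ L) (hh : 0 ≤ h) (hu : ContDiff ℝ 1 u)
    (hv : ContDiff ℝ 1 v) (hw : ∀ x ∈ Ioo 0 L, wOp u (x, -h) = 0) :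
    ∫ p in dom L h, wOp u p * (v p * pdz v p) = 1 / 2 * ∫ p in dom L h, pdx u p * v p ^ 2 := by
  have hflux : ∫ p in dom L h, (wOp u p * (v p * pdz v p) - 1 / 2 * (pdx u p * v p ^ 2)) = 0 := by
    rw [integral_dom_of_hasDerivAt_snd hL hh (by fun_prop)
      (F := fun p ↦ wOp u p * (v p ^ 2 / 2)) fun x z ↦ ?_]
    · rw [intervalIntegral.integral_of_le hL, integral_Ioc_eq_integral_Ioo]
      refine setIntegral_eq_zero_of_forall_eq_zero fun x hx ↦ ?_
      simp only [wOp_top, hw x hx, zero_mul, sub_zero]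
    · refine ((hasDerivAt_wOp hu x z).mul
        (((hasDerivAt_pdz (hv.differentiable one_ne_zero _)).pow 2).div_const 2)).congr_deriv ?_
      simp only [Pi.pow_apply]
      push_cast
      ring
  rwa [MeasureTheory.integral_sub (integrableOn_dom (by fun_prop))
    (integrableOn_dom (by fun_prop)), MeasureTheory.integral_const_mul, sub_eq_zero] at hflux

theorem integral_mul_mul_pdx (hL : 0 ≤ L) (hh : 0 ≤ h) (hu : ContDiff ℝ 1 u)
    (hv : ContDiff ℝ 1 v) (hlat : ∀ z ∈ Icc (-h) 0, u (0, z) = 0 ∧ u (L, z) = 0) :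
    ∫ p in dom L h, u p * (v p * pdx v p) = -(1 / 2) * ∫ p in dom L h, pdx u p * v p ^ 2 := by
  have hflux : ∫ p in dom L h, (u p * (v p * pdx v p) - -(1 / 2) * (pdx u p * v p ^ 2)) = 0 := by
    rw [integral_dom_of_hasDerivAt_fst hL hh (by fun_prop)
      (F := fun p ↦ u p * (v p ^ 2 / 2)) fun x z ↦ ?_]
    · refine (intervalIntegral.integral_congr fun z hz ↦ ?_).trans intervalIntegral.integral_zero
      rw [uIcc_of_le (neg_nonpos.2 hh)] at hz
      simp only [hlat z hz, zero_mul, sub_zero]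
    · refine ((hasDerivAt_pdx (hu.differentiable one_ne_zero _)).mul
        (((hasDerivAt_pdx (hv.differentiable one_ne_zero _)).pow 2).div_const 2)).congr_deriv ?_
      simp only [Pi.pow_apply]
      push_cast
      ring
  rwa [MeasureTheory.integral_sub (integrableOn_dom (by fun_prop))
    (integrableOn_dom (by fun_prop)), MeasureTheory.integral_const_mul, sub_eq_zero] at hflux

theorem integral_mul_pdz (hL : 0 ≤ L) (hh : 0 ≤ h) (hf : ContDiff ℝ 1 f) (hg : ContDiff ℝ 1 g)
    (hbot : ∀ x ∈ Icc 0 L, f (x, -h) = 0) :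
    ∫ p in dom L h, f p * pdz g p =
      (∫ x in 0..L, f (x, 0) * g (x, 0)) - ∫ p in dom L h, pdz f p * g p := by
  have hflux : ∫ p in dom L h, (pdz f p * g p + f p * pdz g p) =
      ∫ x in 0..L, f (x, 0) * g (x, 0) := by
    rw [integral_dom_of_hasDerivAt_snd hL hh (by fun_prop) (F := fun p ↦ f p * g p) fun x z ↦
      (hasDerivAt_pdz (hf.differentiable one_ne_zero _)).mul
        (hasDerivAt_pdz (hg.differentiable one_ne_zero _))]
    refine intervalIntegral.integral_congr fun x hx ↦ ?_
    rw [uIcc_of_le hL] at hx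
    simp only [hbot x hx, zero_mul, sub_zero]
  rw [← hflux, MeasureTheory.integral_add (integrableOn_dom (by fun_prop))
    (integrableOn_dom (by fun_prop)), add_sub_cancel_left]

-- With `∫ u ∂_z u ∂ₓ∂_z u = -½ ∫ ∂ₓu (∂_z u)²` and `∫ w ∂_z u ∂_z∂_z u = ½ ∫ ∂ₓu (∂_z u)²`, all
-- volume terms produced by integrating `u ∂ₓu ∂_z∂_z u` by parts cancel.
theorem integral_advection_mul_pdz_pdz (hL : 0 ≤ L) (hh : 0 ≤ h) (hu : ContDiff ℝ 2 u)
    (hlat : ∀ z ∈ Icc (-h) 0, u (0, z) = 0 ∧ u (L, z) = 0)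
    (hbot : ∀ x ∈ Icc 0 L, u (x, -h) = 0)
    (hw : ∀ x ∈ Ioo 0 L, wOp u (x, -h) = 0) :
    ∫ p in dom L h, advection u p * pdz (pdz u) p =
      ∫ x in 0..L, u (x, 0) * pdx u (x, 0) * pdz u (x, 0) := by
  have hu1 : ContDiff ℝ 1 u := hu.of_le one_le_two
  have hpdx : ContDiff ℝ 1 (pdx u) := contDiff_pdx hu (by norm_num)
  have hpdz : ContDiff ℝ 1 (pdz u) := contDiff_pdz hu (by norm_num)
  have hparts := integral_mul_pdz (f := fun p ↦ u p * pdx u p) hL hh (hu1.mul hpdx) hpdz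
    fun x hx ↦ by simp only [hbot x hx, zero_mul]
  have hvertical := integral_wOp_mul_mul_pdz hL hh hu1 hpdz hw
  have hhorizontal := integral_mul_mul_pdx hL hh hu1 hpdz hlat
  have hvolume : ∫ p in dom L h, pdz (fun q ↦ u q * pdx u q) p * pdz u p =
      (∫ p in dom L h, pdx u p * pdz u p ^ 2) +
        ∫ p in dom L h, u p * (pdz u p * pdx (pdz u) p) := by
    rw [← MeasureTheory.integral_add (integrableOn_dom (by fun_prop))
      (integrableOn_dom (by fun_prop))]
    refine integral_congr_ae (ae_of_all _ fun p ↦ ?_)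
    simp only [pdz_mul (hu1.differentiable one_ne_zero p) (hpdx.differentiable one_ne_zero p),
      pdx_pdz_comm hu]
    ring
  calc ∫ p in dom L h, advection u p * pdz (pdz u) p
      = (∫ p in dom L h, u p * pdx u p * pdz (pdz u) p) +
          ∫ p in dom L h, wOp u p * (pdz u p * pdz (pdz u) p) := by
        rw [← MeasureTheory.integral_add (integrableOn_dom (by fun_prop))
          (integrableOn_dom (by fun_prop))]
        simp only [advection, add_mul, mul_assoc]
    _ = ∫ x in 0..L, u (x, 0) * pdx u (x, 0) * pdz u (x, 0) := by
        rw [hparts, hvolume, hhorizontal, hvertical]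
        ring

theorem integral_top_flux_eq_zero (hu : ContDiff ℝ 1 u) (hL : 0 ≤ L)
    (hleft : u (0, 0) = 0) (hright : u (L, 0) = 0)
    (htop : ∀ x ∈ Icc 0 L, pdz u (x, 0) + α * u (x, 0) = 0) :
    ∫ x in 0..L, u (x, 0) * pdx u (x, 0) * pdz u (x, 0) = 0 := by
  calc ∫ x in 0..L, u (x, 0) * pdx u (x, 0) * pdz u (x, 0)
      = ∫ x in 0..L, -α * (u (x, 0) ^ 2 * pdx u (x, 0)) := by
        refine intervalIntegral.integral_congr fun x hx ↦ ?_
        rw [uIcc_of_le hL] at hx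
        simp only [eq_neg_of_add_eq_zero_left (htop x hx)]
        ring
    _ = -α * (u (L, 0) ^ 3 / 3) - -α * (u (0, 0) ^ 3 / 3) := by
        refine intervalIntegral.integral_eq_sub_of_hasDerivAt
          (f := fun x ↦ -α * (u (x, 0) ^ 3 / 3)) (fun x _ ↦ ?_)
          (Continuous.intervalIntegrable (by fun_prop) _ _)
        refine (((hasDerivAt_pdx (hu.differentiable one_ne_zero (x, 0))).pow 3).div_const 3
          |>.const_mul (-α)).congr_deriv ?_
        push_cast
        ring
    _ = 0 := by simp [hleft, hright]

-- `m` does not depend on `z`, so `m (w ∂_z u - u ∂ₓu) = ∂_z (m w u)`.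
theorem integral_mul_advection {m : ℝ → ℝ} (hL : 0 ≤ L) (hh : 0 ≤ h) (hm : Continuous m)
    (hu : ContDiff ℝ 1 u) (hbot : ∀ x ∈ Icc 0 L, u (x, -h) = 0) :
    ∫ p in dom L h, m p.1 * advection u p =
      2 * ∫ p in dom L h, m p.1 * (u p * pdx u p) := by
  have hflux : ∫ p in dom L h, m p.1 * (-pdx u p * u p + wOp u p * pdz u p) = 0 := by
    rw [integral_dom_of_hasDerivAt_snd hL hh (by fun_prop)
      (F := fun p ↦ m p.1 * (wOp u p * u p)) fun x z ↦ ((hasDerivAt_wOp hu x z).mul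
        (hasDerivAt_pdz (hu.differentiable one_ne_zero _))).const_mul (m x)]
    refine (intervalIntegral.integral_congr fun x hx ↦ ?_).trans intervalIntegral.integral_zero
    rw [uIcc_of_le hL] at hx
    simp [wOp_top, hbot x hx]
  calc ∫ p in dom L h, m p.1 * advection u p
      = ∫ p in dom L h, (2 * (m p.1 * (u p * pdx u p)) +
          m p.1 * (-pdx u p * u p + wOp u p * pdz u p)) := by
        refine integral_congr_ae (ae_of_all _ fun p ↦ ?_)
        simp only [advection]
        ring
    _ = 2 * ∫ p in dom L h, m p.1 * (u p * pdx u p) := by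
        rw [MeasureTheory.integral_add (integrableOn_dom (by fun_prop))
          (integrableOn_dom (by fun_prop)), hflux, add_zero, MeasureTheory.integral_const_mul]

theorem integral_advection_mul_neg_Qop (hL : 0 ≤ L) (hh : 0 ≤ h) (hu : ContDiff ℝ 2 u)
    (hlat : ∀ z ∈ Icc (-h) 0, u (0, z) = 0 ∧ u (L, z) = 0)
    (hbot : ∀ x ∈ Icc 0 L, u (x, -h) = 0)
    (htop : ∀ x ∈ Icc 0 L, pdz u (x, 0) + α * u (x, 0) = 0)
    (hmean : ∀ x ∈ Icc 0 L, ∫ z in -h..0, u (x, z) = 0) :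
    ∫ p in dom L h, advection u p * -Qop h (pdz (pdz u)) p =
      2 * ∫ p in dom L h, verticalMean h (pdz (pdz u)) p.1 * (u p * pdx u p) := by
  have hu1 : ContDiff ℝ 1 u := hu.of_le one_le_two
  have hpdzz : Continuous (pdz (pdz u)) := continuous_pdz (contDiff_pdz hu (by norm_num))
  have hadv : Continuous (advection u) := continuous_advection hu1
  have hmc : Continuous (verticalMean h (pdz (pdz u))) := continuous_verticalMean hpdzz
  have hcorner := hlat 0 (right_mem_Icc.2 (neg_nonpos.2 hh))
  have horth : ∫ p in dom L h, advection u p * pdz (pdz u) p = 0 :=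
    (integral_advection_mul_pdz_pdz hL hh hu hlat hbot
      fun x hx ↦ wOp_bottom_eq_zero hu1 hmean hx).trans
      (integral_top_flux_eq_zero hu1 hL hcorner.1 hcorner.2 htop)
  calc ∫ p in dom L h, advection u p * -Qop h (pdz (pdz u)) p
      = ∫ p in dom L h, (verticalMean h (pdz (pdz u)) p.1 * advection u p -
          advection u p * pdz (pdz u) p) := by
        refine integral_congr_ae (ae_of_all _ fun p ↦ ?_)
        simp only [Qop, verticalMean]
        ring
    _ = 2 * ∫ p in dom L h, verticalMean h (pdz (pdz u)) p.1 * (u p * pdx u p) := by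
        rw [MeasureTheory.integral_sub (integrableOn_dom (by fun_prop))
          (integrableOn_dom (by fun_prop)), horth, sub_zero,
          integral_mul_advection hL hh hmc hu1 hbot]

theorem integral_verticalMean_pdz_pdz_mul (hu : ContDiff ℝ 2 u)
    (htop : ∀ x ∈ Icc 0 L, pdz u (x, 0) + α * u (x, 0) = 0) :
    ∫ p in dom L h, verticalMean h (pdz (pdz u)) p.1 * (u p * pdx u p) =
      -(1 / h) * (α * (∫ p in dom L h, u (p.1, 0) * (u p * pdx u p)) +
        ∫ p in dom L h, pdz u (p.1, -h) * (u p * pdx u p)) := by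
  have hpdz : ContDiff ℝ 1 (pdz u) := contDiff_pdz hu (by norm_num)
  have hu1 : ContDiff ℝ 1 u := hu.of_le one_le_two
  calc ∫ p in dom L h, verticalMean h (pdz (pdz u)) p.1 * (u p * pdx u p)
      = ∫ p in dom L h, -(1 / h) * (α * (u (p.1, 0) * (u p * pdx u p)) +
          pdz u (p.1, -h) * (u p * pdx u p)) := by
        refine setIntegral_congr_fun (measurableSet_Ioo.prod measurableSet_Ioo) fun p hp ↦ ?_
        simp only [verticalMean_pdz hpdz,
          eq_neg_of_add_eq_zero_left (htop p.1 (Ioo_subset_Icc_self hp.1))]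
        ring
    _ = _ := by
        rw [MeasureTheory.integral_const_mul, MeasureTheory.integral_add
          (integrableOn_dom (by fun_prop)) (integrableOn_dom (by fun_prop)),
          MeasureTheory.integral_const_mul]

end Advection

section Estimates

variable {L h : ℝ} {u v : ℝ × ℝ → ℝ}

theorem abs_integral_mul_mul_pdx_le {b : ℝ → ℝ} (hL : 0 ≤ L) (hh : 0 ≤ h) (hb : Continuous b)
    (hu : ContDiff ℝ 1 u) (hleft : ∀ z ∈ Icc (-h) 0, u (0, z) = 0) :
    |∫ p in dom L h, b p.1 * (u p * pdx u p)| ≤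
      √((∫ x in 0..L, b x ^ 2) * (2 * (l2 L h u * h1n L h u))) * h1n L h u := by
  have hslice : ∀ x ∈ Icc 0 L, ∫ z in -h..0, u (x, z) ^ 2 ≤ 2 * (l2 L h u * h1n L h u) :=
    fun x hx ↦ (integral_sq_vertical_slice_le hh hu hleft hx).trans (by
      gcongr
      exacts [l2_nonneg, l2_pdx_le_h1n])
  exact (abs_integral_mul_mul_le hL hh hb hu.continuous (continuous_pdx hu) hslice).trans
    (mul_le_mul_of_nonneg_left l2_pdx_le_h1n (Real.sqrt_nonneg _))

theorem abs_integral_top_trace_mul_le (hL : 0 ≤ L) (hh : 0 ≤ h) (hu : ContDiff ℝ 1 u)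
    (hleft : ∀ z ∈ Icc (-h) 0, u (0, z) = 0) (hbot : ∀ x ∈ Icc 0 L, u (x, -h) = 0) :
    |∫ p in dom L h, u (p.1, 0) * (u p * pdx u p)| ≤ 2 * (l2 L h u * h1n L h u ^ 2) := by
  have hK : 0 ≤ 2 * (l2 L h u * h1n L h u) :=
    mul_nonneg zero_le_two (mul_nonneg l2_nonneg h1n_nonneg)
  have htrace : ∫ x in 0..L, u (x, 0) ^ 2 ≤ 2 * (l2 L h u * h1n L h u) :=
    (integral_sq_horizontal_slice_le_of_bottom_eq_zero hL hu hbot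
      (right_mem_Icc.2 (neg_nonpos.2 hh))).trans (by
        gcongr
        exacts [l2_nonneg, l2_pdz_le_h1n])
  calc |∫ p in dom L h, u (p.1, 0) * (u p * pdx u p)|
      ≤ √((∫ x in 0..L, u (x, 0) ^ 2) * (2 * (l2 L h u * h1n L h u))) * h1n L h u :=
        abs_integral_mul_mul_pdx_le (b := fun x ↦ u (x, 0)) hL hh (by fun_prop) hu hleft
    _ ≤ √(2 * (l2 L h u * h1n L h u) * (2 * (l2 L h u * h1n L h u))) * h1n L h u := by
        gcongr
        exact h1n_nonneg
    _ = 2 * (l2 L h u * h1n L h u ^ 2) := by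
        rw [Real.sqrt_mul_self hK]
        ring

theorem abs_integral_bottom_trace_mul_le (hL : 0 ≤ L) (hh : 0 < h) (hu : ContDiff ℝ 1 u)
    (hv : ContDiff ℝ 1 v) (hleft : ∀ z ∈ Icc (-h) 0, u (0, z) = 0) :
    |∫ p in dom L h, v (p.1, -h) * (u p * pdx u p)| ≤
      √((1 / h + 2) * 2) * (l2 L h v ^ ((1 : ℝ) / 2) * h1n L h v ^ ((1 : ℝ) / 2) *
        l2 L h u ^ ((1 : ℝ) / 2) * h1n L h u ^ ((3 : ℝ) / 2)) := by
  have hu0 : 0 ≤ l2 L h u := l2_nonneg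
  have hU0 : 0 ≤ h1n L h u := h1n_nonneg
  have hv0 : 0 ≤ l2 L h v := l2_nonneg
  have hV0 : 0 ≤ h1n L h v := h1n_nonneg
  have htrace : ∫ x in 0..L, v (x, -h) ^ 2 ≤ (1 / h + 2) * (l2 L h v * h1n L h v) :=
    calc ∫ x in 0..L, v (x, -h) ^ 2
        ≤ 1 / h * l2 L h v ^ 2 + 2 * (l2 L h v * l2 L h (pdz v)) :=
          integral_sq_horizontal_slice_le hL hh hv (left_mem_Icc.2 (neg_nonpos.2 hh.le))
      _ ≤ 1 / h * (l2 L h v * h1n L h v) + 2 * (l2 L h v * h1n L h v) := by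
          rw [sq]
          gcongr
          exacts [l2_le_h1n, l2_pdz_le_h1n]
      _ = (1 / h + 2) * (l2 L h v * h1n L h v) := by ring
  have hpow : h1n L h u ^ ((3 : ℝ) / 2) = √(h1n L h u) * h1n L h u := by
    rw [Real.sqrt_eq_rpow, show (3 : ℝ) / 2 = 1 / 2 + 1 by norm_num,
      Real.rpow_add_of_nonneg hU0 (by norm_num) zero_le_one, Real.rpow_one]
  calc |∫ p in dom L h, v (p.1, -h) * (u p * pdx u p)|
      ≤ √((∫ x in 0..L, v (x, -h) ^ 2) * (2 * (l2 L h u * h1n L h u))) * h1n L h u :=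
        abs_integral_mul_mul_pdx_le (b := fun x ↦ v (x, -h)) hL hh.le (by fun_prop) hu hleft
    _ ≤ √((1 / h + 2) * (l2 L h v * h1n L h v) * (2 * (l2 L h u * h1n L h u))) * h1n L h u := by
        gcongr
    _ = √((1 / h + 2) * 2 * (l2 L h v * h1n L h v * l2 L h u * h1n L h u)) * h1n L h u := by
        congr 2
        ring
    _ = _ := by
        rw [hpow, ← Real.sqrt_eq_rpow, ← Real.sqrt_eq_rpow, ← Real.sqrt_eq_rpow,
          Real.sqrt_mul (by positivity), Real.sqrt_mul (by positivity),
          Real.sqrt_mul (by positivity), Real.sqrt_mul (by positivity),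
          Real.sqrt_mul hv0]
        ring

end Estimates

theorem stmt19_general {L h : ℝ} (hL : 0 ≤ L) (hh : 0 < h) (α : ℝ) {u : ℝ × ℝ → ℝ}
    (hu : ContDiff ℝ 2 u)
    (hlat : ∀ z ∈ Icc (-h) 0, u (0, z) = 0 ∧ u (L, z) = 0)
    (hbot : ∀ x ∈ Icc 0 L, u (x, -h) = 0)
    (htop : ∀ x ∈ Icc 0 L, pdz u (x, 0) + α * u (x, 0) = 0)
    (hmean : ∀ x ∈ Icc 0 L, ∫ z in -h..0, u (x, z) = 0) :
    |∫ p in dom L h, (u p * pdx u p + wOp u p * pdz u p) * -Qop h (pdz (pdz u)) p| ≤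
      2 / h * (2 * |α| + √((1 / h + 2) * 2)) * (l2 L h u * h1n L h u ^ 2 +
        l2 L h (pdz u) ^ ((1 : ℝ) / 2) * h1n L h (pdz u) ^ ((1 : ℝ) / 2) *
          l2 L h u ^ ((1 : ℝ) / 2) * h1n L h u ^ ((3 : ℝ) / 2)) := by
  have hu1 : ContDiff ℝ 1 u := hu.of_le one_le_two
  have hleft : ∀ z ∈ Icc (-h) 0, u (0, z) = 0 := fun z hz ↦ (hlat z hz).1
  have htop_le := abs_integral_top_trace_mul_le hL hh.le hu1 hleft hbot
  have hbot_le := abs_integral_bottom_trace_mul_le hL hh hu1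
    (contDiff_pdz hu (by norm_num)) hleft
  set T := ∫ p in dom L h, u (p.1, 0) * (u p * pdx u p)
  set B := ∫ p in dom L h, pdz u (p.1, -h) * (u p * pdx u p)
  set X := l2 L h u * h1n L h u ^ 2
  set Y := l2 L h (pdz u) ^ ((1 : ℝ) / 2) * h1n L h (pdz u) ^ ((1 : ℝ) / 2) *
    l2 L h u ^ ((1 : ℝ) / 2) * h1n L h u ^ ((3 : ℝ) / 2)
  have hX : 0 ≤ X := mul_nonneg l2_nonneg (sq_nonneg _)
  have hY : 0 ≤ Y := by
    have := l2_nonneg (L := L) (h := h) (f := u)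
    have := l2_nonneg (L := L) (h := h) (f := pdz u)
    have := h1n_nonneg (L := L) (h := h) (f := u)
    have := h1n_nonneg (L := L) (h := h) (f := pdz u)
    positivity
  calc |∫ p in dom L h, advection u p * -Qop h (pdz (pdz u)) p|
      = |2 * (-(1 / h) * (α * T + B))| := by
        rw [integral_advection_mul_neg_Qop hL hh.le hu hlat hbot htop hmean,
          integral_verticalMean_pdz_pdz_mul hu htop]
    _ = 2 / h * |α * T + B| := by
        rw [← mul_assoc, abs_mul, mul_neg, abs_neg, mul_one_div, abs_of_pos (by positivity)]
    _ ≤ 2 / h * (|α| * |T| + |B|) := by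
        gcongr
        exact (abs_add_le _ _).trans_eq (by rw [abs_mul])
    _ ≤ 2 / h * (|α| * (2 * X) + √((1 / h + 2) * 2) * Y) := by gcongr
    _ ≤ 2 / h * (|α| * (2 * (X + Y)) + √((1 / h + 2) * 2) * (X + Y)) := by
        gcongr <;> linarith
    _ = 2 / h * (2 * |α| + √((1 / h + 2) * 2)) * (X + Y) := by ring

theorem stmt19 (L h : ℝ) (hL : 0 < L) (hh : 0 < h) (α : ℝ) (hα : 0 < α) :
    ∃ c > 0, ∀ u : ℝ × ℝ → ℝ,
      ContDiff ℝ 2 u →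
      (∀ z ∈ Icc (-h) (0:ℝ), u (0, z) = 0 ∧ u (L, z) = 0) →
      (∀ x ∈ Icc (0:ℝ) L, u (x, -h) = 0) →
      (∀ x ∈ Icc (0:ℝ) L, pdz u (x, 0) + α * u (x, 0) = 0) →
      (∀ x ∈ Icc (0:ℝ) L, (∫ z in (-h)..(0:ℝ), u (x, z)) = 0) →
      |∫ p in dom L h,
          (u p * pdx u p + wOp u p * pdz u p) * (-(Qop h (pdz (pdz u)) p))| ≤
        c * (l2 L h u * h1n L h u ^ 2 +
          l2 L h (pdz u) ^ ((1:ℝ)/2) * h1n L h (pdz u) ^ ((1:ℝ)/2)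
            * l2 L h u ^ ((1:ℝ)/2) * h1n L h u ^ ((3:ℝ)/2)) := by
  exact ⟨2 / h * (2 * |α| + √((1 / h + 2) * 2)), by positivity,
    fun u hu hlat hbot htop hmean ↦ stmt19_general hL.le hh α hu hlat hbot htop hmean⟩
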